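/- The Whitten group Γ₂ has exactly 35 subgroups. -/

import Mathlib

/-- The homomorphism `ω : S_μ → Aut(Z₂^{μ+1})`: a permutation `p` fixes the 0th
coordinate (indexed by `none`) and permutes the remaining `μ` coordinates
(indexed by `some i`). -/
def whittenHom (μ : ℕ) :
    Equiv.Perm (Fin μ) →* MulAut (Option (Fin μ) → Multiplicative (ZMod 2)) where
  toFun p := MulEquiv.arrowCongr (Equiv.optionCongr p) (MulEquiv.refl _)
  map_one' := by
    ext f x
    cases x <;> rfl
  map_mul' := by
    intro p q
    ext f x
    cases x <;> rfl

/-- The Whitten group `Γ_μ = Z₂^{μ+1} ⋊_ω S_μ`. -/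
abbrev WhittenGroup (μ : ℕ) : Type :=
  (Option (Fin μ) → Multiplicative (ZMod 2)) ⋊[whittenHom μ] Equiv.Perm (Fin μ)

/-!
The Whitten group `Γ₂` is a generalized dihedral group: it has an abelian subgroup `A` of index two
such that every element outside `A` is an involution. A subgroup `K` of such a group is either
contained in `A`, or of the form `B ∪ gB` with `B = K ∩ A` and `g ∉ A`; any `B ≤ A` and any of
the `[A : B]` cosets of `B` outside `A` occur, so there are `∑ B ≤ A, (1 + [A : B])` subgroups.

For `Γ₂` the group `A` has order eight and exactly three involutions, hence three subgroups of
order two, and by duality of finite abelian groups three of index two. The sum is therefore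
`(1 + 1) + 3 (1 + 2) + 3 (1 + 4) + (1 + 8) = 35`.
-/

theorem mul_notMem_of_notMem_of_mem {G : Type*} [Group G] {A : Subgroup G} {s a : G} (hs : s ∉ A)
    (ha : a ∈ A) : s * a ∉ A :=
  (A.mul_mem_cancel_right ha).not.2 hs

/-- `G` is generalized dihedral over its subgroup `A`. Requiring the elements outside `A` to be
involutions is the same as requiring one of them to be an involution inverting `A`; it forces `A`
to be abelian. -/
structure IsGeneralizedDihedral {G : Type*} [Group G] (A : Subgroup G) : Prop where
  index_eq_two : A.index = 2
  mul_self_eq_one : ∀ g ∉ A, g * g = 1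

namespace IsGeneralizedDihedral

variable {G : Type*} [Group G] {A B : Subgroup G} {a g s : G}

theorem exists_notMem (hA : IsGeneralizedDihedral A) : ∃ s, s ∉ A := by
  by_contra! h
  simpa [(Subgroup.eq_top_iff' A).2 h] using hA.index_eq_two

theorem mul_eq_inv_mul (hA : IsGeneralizedDihedral A) (hs : s ∉ A) (ha : a ∈ A) :
    s * a = a⁻¹ * s :=
  calc s * a = (s * a)⁻¹ :=
        eq_inv_of_mul_eq_one_left (hA.mul_self_eq_one _ (mul_notMem_of_notMem_of_mem hs ha))
    _ = a⁻¹ * s := by rw [mul_inv_rev, inv_eq_of_mul_eq_one_left (hA.mul_self_eq_one s hs)]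

theorem isMulCommutative (hA : IsGeneralizedDihedral A) : IsMulCommutative A := by
  obtain ⟨s, hs⟩ := hA.exists_notMem
  refine ⟨⟨fun a b => Subtype.ext <| inv_injective <| mul_right_cancel (b := s) ?_⟩⟩
  calc (a * b : G)⁻¹ * s = s * (a * b) := (hA.mul_eq_inv_mul hs (a * b).2).symm
    _ = (a : G)⁻¹ * (s * b) := by rw [← mul_assoc, hA.mul_eq_inv_mul hs a.2, mul_assoc]
    _ = (b * a : G)⁻¹ * s := by rw [hA.mul_eq_inv_mul hs b.2, mul_inv_rev, mul_assoc]

/-- The subgroup `B ∪ sB` attached to `B ≤ A` and an involution `s` outside `A`. -/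
def adjoin (hA : IsGeneralizedDihedral A) (hB : B ≤ A) (hs : s ∉ A) : Subgroup G where
  carrier := {x | x ∈ B ∨ s * x ∈ B}
  one_mem' := Or.inl B.one_mem
  mul_mem' := by
    rintro x y (hx | hx) (hy | hy)
    · exact Or.inl (B.mul_mem hx hy)
    · have h : s * (x * y) = x⁻¹ * (s * y) := by
        rw [← mul_assoc, hA.mul_eq_inv_mul hs (hB hx), mul_assoc]
      exact Or.inr (h ▸ B.mul_mem (B.inv_mem hx) hy)
    · exact Or.inr (mul_assoc s x y ▸ B.mul_mem hx hy)
    · have h : x * y = (s * x)⁻¹ * (s * y) := by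
        rw [← mul_assoc, ← hA.mul_eq_inv_mul hs (hB hx), ← mul_assoc, hA.mul_self_eq_one s hs,
          one_mul]
      exact Or.inl (h ▸ B.mul_mem (B.inv_mem hx) hy)
  inv_mem' := by
    rintro x (hx | hx)
    · exact Or.inl (B.inv_mem hx)
    · have hxA : x ∉ A := fun h => mul_notMem_of_notMem_of_mem hs h (hB hx)
      exact Or.inr (by rwa [inv_eq_of_mul_eq_one_left (hA.mul_self_eq_one x hxA)])

theorem mem_adjoin (hA : IsGeneralizedDihedral A) (hB : B ≤ A) (hs : s ∉ A) :
    g ∈ hA.adjoin hB hs ↔ g ∈ B ∨ s * g ∈ B :=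
  Iff.rfl

theorem self_mem_adjoin (hA : IsGeneralizedDihedral A) (hB : B ≤ A) (hs : s ∉ A) :
    s ∈ hA.adjoin hB hs :=
  Or.inr (hA.mul_self_eq_one s hs ▸ B.one_mem)

theorem adjoin_inf (hA : IsGeneralizedDihedral A) (hB : B ≤ A) (hs : s ∉ A) :
    hA.adjoin hB hs ⊓ A = B := by
  ext x
  rw [Subgroup.mem_inf, mem_adjoin]
  refine ⟨?_, fun hx => ⟨Or.inl hx, hB hx⟩⟩
  rintro ⟨hx | hx, hxA⟩
  · exact hx
  · exact absurd (hB hx) (mul_notMem_of_notMem_of_mem hs hxA)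

theorem eq_adjoin (hA : IsGeneralizedDihedral A) {K : Subgroup G} (hsK : s ∈ K) (hs : s ∉ A) :
    K = hA.adjoin (inf_le_right : K ⊓ A ≤ A) hs := by
  ext x
  have hmul : s * x ∈ A ↔ (s ∈ A ↔ x ∈ A) := Subgroup.mul_mem_iff_of_index_two hA.index_eq_two
  rw [mem_adjoin, Subgroup.mem_inf, Subgroup.mem_inf, K.mul_mem_cancel_left hsK, hmul]
  tauto

theorem adjoin_eq_adjoin_iff (hA : IsGeneralizedDihedral A) {t : G} (hB : B ≤ A) (hs : s ∉ A)
    (ht : t ∉ A) : hA.adjoin hB hs = hA.adjoin hB ht ↔ s * t ∈ B := by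
  constructor
  · intro h
    have htB : t ∉ B := fun h => ht (hB h)
    exact ((hA.mem_adjoin hB hs).1 (h ▸ hA.self_mem_adjoin hB ht)).resolve_left htB
  · intro hst
    have ht' : t ∈ hA.adjoin hB hs := Or.inr hst
    have h := hA.eq_adjoin ht' ht
    simpa only [hA.adjoin_inf hB hs] using h

theorem adjoin_mul_eq_adjoin_mul_iff (hA : IsGeneralizedDihedral A) (hB : B ≤ A) (hs : s ∉ A)
    {a b : A} :
    hA.adjoin hB (mul_notMem_of_notMem_of_mem hs a.2) =
        hA.adjoin hB (mul_notMem_of_notMem_of_mem hs b.2) ↔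
      a⁻¹ * b ∈ B.subgroupOf A := by
  have h : s * a * (s * b) = (a : G)⁻¹ * b := by
    rw [hA.mul_eq_inv_mul hs a.2, mul_assoc, ← mul_assoc s s, hA.mul_self_eq_one s hs, one_mul]
  rw [adjoin_eq_adjoin_iff, h]
  rfl

/-- The subgroups `B ∪ saB` for `a ∈ A`, indexed by the coset `aB`. -/
def adjoinCoset (hA : IsGeneralizedDihedral A) (hB : B ≤ A) (hs : s ∉ A) :
    A ⧸ B.subgroupOf A → Subgroup G :=
  Quotient.lift (fun a : A => hA.adjoin hB (mul_notMem_of_notMem_of_mem hs a.2)) fun _ _ hab =>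
    (hA.adjoin_mul_eq_adjoin_mul_iff hB hs).2 (QuotientGroup.leftRel_apply.1 hab)

theorem adjoinCoset_injective (hA : IsGeneralizedDihedral A) (hB : B ≤ A) (hs : s ∉ A) :
    Function.Injective (hA.adjoinCoset hB hs) := by
  rintro ⟨a⟩ ⟨b⟩ hab
  exact QuotientGroup.eq.2 ((hA.adjoin_mul_eq_adjoin_mul_iff hB hs).1 hab)

theorem setOf_inf_eq (hA : IsGeneralizedDihedral A) (hB : B ≤ A) (hs : s ∉ A) :
    {K : Subgroup G | K ⊓ A = B} = insert B (Set.range (hA.adjoinCoset hB hs)) := by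
  ext K
  constructor
  · rintro rfl
    by_cases hK : K ≤ A
    · exact Or.inl (inf_eq_left.2 hK).symm
    · obtain ⟨t, htK, ht⟩ := SetLike.not_le_iff_exists.1 hK
      have hst : s⁻¹ * t ∈ A := by
        simp [Subgroup.mul_mem_iff_of_index_two hA.index_eq_two, hs, ht]
      refine Or.inr ⟨QuotientGroup.mk ⟨s⁻¹ * t, hst⟩, ?_⟩
      exact (hA.eq_adjoin (by simpa using htK) (mul_notMem_of_notMem_of_mem hs hst)).symm
  · rintro (rfl | ⟨⟨a⟩, rfl⟩)
    · exact inf_eq_left.2 hB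
    · exact hA.adjoin_inf hB (mul_notMem_of_notMem_of_mem hs a.2)

theorem card_inf_eq [Finite G] (hA : IsGeneralizedDihedral A) (hB : B ≤ A) :
    Nat.card {K : Subgroup G // K ⊓ A = B} = 1 + B.relIndex A := by
  obtain ⟨s, hs⟩ := hA.exists_notMem
  have hBrange : B ∉ Set.range (hA.adjoinCoset hB hs) := by
    rintro ⟨⟨a⟩, h⟩
    have hsa := mul_notMem_of_notMem_of_mem hs a.2
    exact hsa (hB (h.le (hA.self_mem_adjoin hB hsa)))
  calc Nat.card {K : Subgroup G // K ⊓ A = B}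
      = (insert B (Set.range (hA.adjoinCoset hB hs))).ncard := by
        rw [← hA.setOf_inf_eq hB hs]; rfl
    _ = (Set.range (hA.adjoinCoset hB hs)).ncard + 1 := Set.ncard_insert_of_notMem hBrange
    _ = 1 + B.relIndex A := by
        rw [← Nat.card_coe_set_eq, Nat.card_range_of_injective (hA.adjoinCoset_injective hB hs),
          add_comm]
        rfl

theorem card_subgroup [Finite G] [Fintype (Subgroup A)] (hA : IsGeneralizedDihedral A) :
    Nat.card (Subgroup G) = ∑ B : Subgroup A, (1 + B.index) := by
  have hfiber (B : Subgroup A) :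
      Nat.card {K : Subgroup G // K.subgroupOf A = B} = 1 + B.index := by
    have hiff (K : Subgroup G) : K.subgroupOf A = B ↔ K ⊓ A = B.map A.subtype := by
      rw [← Subgroup.subgroupOf_map_subtype, (Subgroup.map_injective A.subtype_injective).eq_iff]
    rw [Nat.card_congr (Equiv.subtypeEquivRight hiff), hA.card_inf_eq (Subgroup.map_subtype_le B),
      Subgroup.relIndex, Subgroup.subgroupOf, Subgroup.comap_map_eq_self_of_injective
        A.subtype_injective]
  rw [← Nat.card_congr (Equiv.sigmaFiberEquiv fun K : Subgroup G => K.subgroupOf A),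
    Nat.card_sigma]
  exact Finset.sum_congr rfl fun B _ => hfiber B

end IsGeneralizedDihedral

theorem card_subgroup_index_eq_card_subgroup_card (G : Type*) [CommGroup G] [Finite G] (n : ℕ) :
    Nat.card {H : Subgroup G // H.index = n} = Nat.card {H : Subgroup G // Nat.card H = n} := by
  obtain ⟨e⟩ := CommGroup.monoidHom_mulEquiv_of_hasEnoughRootsOfUnity G ℂ
  let dual : Subgroup G ≃ Subgroup G :=
    (CommGroup.subgroupOrderIsoSubgroupMonoidHom G ℂ).toEquiv.trans
      (OrderDual.ofDual.trans e.mapSubgroup.toEquiv)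
  have card_dual (H : Subgroup G) : Nat.card (dual H) = H.index :=
    (Subgroup.card_map_of_injective e.injective).trans
      (CommGroup.card_subgroupOrderIsoSubgroupMonoidHom ℂ H)
  exact Nat.card_congr (dual.subtypeEquiv fun H => by rw [card_dual])

section Counting

variable {G : Type*} [Group G]

theorem eq_of_zpowers_eq_of_orderOf_eq_two {g h : G} (hg : orderOf g = 2) (hh : orderOf h = 2)
    (hgh : Subgroup.zpowers g = Subgroup.zpowers h) : g = h := by
  have ne_one {x : G} (hx : orderOf x = 2) : x ≠ 1 := by
    rintro rfl
    simp at hx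
  have hmem : g ∈ Subgroup.zpowers h := hgh.le (Subgroup.mem_zpowers g)
  have hunique : ∃! x : Subgroup.zpowers h, x ≠ 1 :=
    (Nat.card_eq_two_iff' 1).1 ((Nat.card_zpowers h).trans hh)
  have heq : (⟨g, hmem⟩ : Subgroup.zpowers h) = ⟨h, Subgroup.mem_zpowers h⟩ :=
    hunique.unique (by simpa using ne_one hg) (by simpa using ne_one hh)
  exact congrArg Subtype.val heq

theorem exists_zpowers_eq_of_card_eq_two {H : Subgroup G} (hH : Nat.card H = 2) :
    ∃ g, orderOf g = 2 ∧ Subgroup.zpowers g = H := by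
  have : Finite H := Nat.finite_of_card_ne_zero (by omega)
  obtain ⟨g, hg, -⟩ := (Nat.card_eq_two_iff' (1 : H)).1 hH
  have hg2 : orderOf (g : G) = 2 :=
    (Subgroup.orderOf_coe g).trans (orderOf_eq_prime (hH ▸ pow_card_eq_one') hg)
  exact ⟨g, hg2, Subgroup.eq_of_le_of_card_ge (Subgroup.zpowers_le.2 g.2)
    (by rw [hH, Nat.card_zpowers, hg2])⟩

variable (G) in
theorem card_subgroup_card_two_eq_card_orderOf_two :
    Nat.card {H : Subgroup G // Nat.card H = 2} = Nat.card {g : G // orderOf g = 2} := by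
  let cyclic (g : {g : G // orderOf g = 2}) : {H : Subgroup G // Nat.card H = 2} :=
    ⟨Subgroup.zpowers g.1, (Nat.card_zpowers g.1).trans g.2⟩
  refine (Nat.card_congr (Equiv.ofBijective cyclic ⟨fun g h hgh => ?_, fun ⟨H, hH⟩ => ?_⟩)).symm
  · exact Subtype.ext
      (eq_of_zpowers_eq_of_orderOf_eq_two g.2 h.2 (congrArg Subtype.val hgh))
  · obtain ⟨g, hg, hgH⟩ := exists_zpowers_eq_of_card_eq_two hH
    exact ⟨⟨g, hg⟩, Subtype.ext hgH⟩

variable (G) in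
theorem card_subgroup_index_one : Nat.card {H : Subgroup G // H.index = 1} = 1 := by
  simp [Subgroup.index_eq_one]

variable (G) in
theorem card_subgroup_card_one : Nat.card {H : Subgroup G // Nat.card H = 1} = 1 := by
  simp [Subgroup.card_eq_one]

theorem index_eq_iff_card_eq [Finite G] (H : Subgroup G) {m n : ℕ} (h : Nat.card G = m * n) :
    H.index = m ↔ Nat.card H = n := by
  have hmul : H.index * Nat.card H = m * n := H.index_mul_card.trans h
  constructor <;> rintro rfl
  · exact Nat.eq_of_mul_eq_mul_left (Nat.pos_of_ne_zero H.index_ne_zero_of_finite) hmul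
  · exact Nat.eq_of_mul_eq_mul_right Nat.card_pos hmul

theorem sum_subgroup_index_eq_sum_divisors [Finite G] [Fintype (Subgroup G)] {M : Type*}
    [AddCommMonoid M] (f : ℕ → M) :
    ∑ H : Subgroup G, f H.index =
      ∑ d ∈ (Nat.card G).divisors, Nat.card {H : Subgroup G // H.index = d} • f d := by
  classical
  have hmaps : ∀ H ∈ (Finset.univ : Finset (Subgroup G)), H.index ∈ (Nat.card G).divisors :=
    fun H _ => Nat.mem_divisors.2 ⟨H.index_dvd_card, Nat.card_pos.ne'⟩
  rw [← Finset.sum_fiberwise_of_maps_to hmaps]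
  refine Finset.sum_congr rfl fun d _ => ?_
  rw [Nat.card_eq_fintype_card, Fintype.card_subtype]
  exact Finset.sum_eq_card_nsmul fun H hH => by rw [(Finset.mem_filter.1 hH).2]

end Counting

theorem sum_one_add_index_of_card_eq_prime_pow_three {G : Type*} [CommGroup G]
    [Fintype (Subgroup G)] {p : ℕ} (hp : p.Prime) (hG : Nat.card G = p ^ 3) :
    ∑ H : Subgroup G, (1 + H.index) =
      p ^ 3 + 3 + (p ^ 2 + p + 2) * Nat.card {H : Subgroup G // Nat.card H = p} := by
  have : Finite G := Nat.finite_of_card_ne_zero (hG ▸ pow_ne_zero 3 hp.ne_zero)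
  have hindex_sq : Nat.card {H : Subgroup G // H.index = p ^ 2} =
      Nat.card {H : Subgroup G // Nat.card H = p} :=
    Nat.card_congr (Equiv.subtypeEquivRight fun H => index_eq_iff_card_eq H (by rw [hG, pow_succ]))
  have hindex_cube : Nat.card {H : Subgroup G // H.index = p ^ 3} = 1 :=
    (Nat.card_congr (Equiv.subtypeEquivRight fun H =>
      index_eq_iff_card_eq H (by rw [hG, mul_one]))).trans (card_subgroup_card_one G)
  rw [sum_subgroup_index_eq_sum_divisors (fun n => 1 + n), hG, Nat.sum_divisors_prime_pow hp]
  simp only [Finset.sum_range_succ, Finset.sum_range_zero, pow_zero, pow_one, smul_eq_mul,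
    card_subgroup_index_one, card_subgroup_index_eq_card_subgroup_card G p, hindex_sq, hindex_cube]
  ring

open scoped IsMulCommutative in
theorem IsGeneralizedDihedral.card_subgroup_of_card_eq_prime_pow_three {G : Type*} [Group G]
    {A : Subgroup G} (hA : IsGeneralizedDihedral A) {p : ℕ} (hp : p.Prime)
    (hcard : Nat.card A = p ^ 3) :
    Nat.card (Subgroup G) =
      p ^ 3 + 3 + (p ^ 2 + p + 2) * Nat.card {B : Subgroup A // Nat.card B = p} := by
  have hG : Nat.card G = p ^ 3 * 2 := by rw [← A.card_mul_index, hcard, hA.index_eq_two]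
  have : Finite G := Nat.finite_of_card_ne_zero (hG ▸ by simp [hp.ne_zero])
  have := hA.isMulCommutative
  have := Fintype.ofFinite (Subgroup A)
  rw [hA.card_subgroup, sum_one_add_index_of_card_eq_prime_pow_three hp hcard]

instance {N H : Type*} [Group N] [Group H] [Fintype N] [Fintype H] {φ : H →* MulAut N} :
    Fintype (N ⋊[φ] H) :=
  Fintype.ofEquiv _ SemidirectProduct.equivProd.symm

/-- The character `(ε₀, …, ε_μ; p) ↦ ε₁ ⋯ ε_μ · sgn p` of `Γ_μ`, where `ε ∈ ZMod 2` is read as the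
sign `(-1) ^ ε`. For `μ = 2` its kernel is the abelian part of the generalized dihedral group. -/
def whittenSign (μ : ℕ) : WhittenGroup μ →* ℤˣ where
  toFun g := (∏ i, (-1) ^ (g.left (some i)).toAdd) * Equiv.Perm.sign g.right
  map_one' := by simp
  map_mul' g h := by
    have hperm : ∏ i, (-1 : ℤˣ) ^ (whittenHom μ g.right h.left (some i)).toAdd =
        ∏ i, (-1 : ℤˣ) ^ (h.left (some i)).toAdd :=
      Equiv.prod_comp g.right.symm fun i => (-1 : ℤˣ) ^ (h.left (some i)).toAdd
    simp only [SemidirectProduct.mul_left, SemidirectProduct.mul_right, Pi.mul_apply, toAdd_mul,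
      uzpow_add, Finset.prod_mul_distrib, map_mul, hperm]
    exact mul_mul_mul_comm _ _ _ _

theorem whittenSign_two_surjective : Function.Surjective (whittenSign 2) := by
  decide

theorem isGeneralizedDihedral_ker_whittenSign_two :
    IsGeneralizedDihedral (whittenSign 2).ker where
  index_eq_two := by
    rw [Subgroup.index_ker, MonoidHom.range_eq_top.2 whittenSign_two_surjective,
      Subgroup.card_top, Nat.card_eq_fintype_card, Fintype.card_units_int]
  mul_self_eq_one := by
    simp_rw [MonoidHom.mem_ker, SemidirectProduct.ext_iff]
    decide

theorem card_ker_whittenSign_two : Nat.card (whittenSign 2).ker = 2 ^ 3 := by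
  have hcard : Nat.card (WhittenGroup 2) = 16 := by
    rw [SemidirectProduct.card]
    simp [Fintype.card_perm]
  have hmul := (whittenSign 2).ker.card_mul_index
  rw [isGeneralizedDihedral_ker_whittenSign_two.index_eq_two, hcard] at hmul
  omega

-- The three involutions are the nontrivial `(ε₀, ε₁, ε₂; 1)` with `ε₁ = ε₂`.
theorem card_orderOf_two_ker_whittenSign_two :
    Nat.card {g : (whittenSign 2).ker // orderOf g = 2} = 3 := by
  simp_rw [orderOf_eq_prime_iff, Ne, Subtype.ext_iff, SemidirectProduct.ext_iff]
  rw [Nat.card_eq_fintype_card]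
  decide +kernel

/-- The Whitten group Γ₂ has exactly 35 subgroups. -/
theorem whittenGroup_two_num_subgroups :
    Nat.card (Subgroup (WhittenGroup 2)) = 35 := by
  rw [isGeneralizedDihedral_ker_whittenSign_two.card_subgroup_of_card_eq_prime_pow_three
    Nat.prime_two card_ker_whittenSign_two, card_subgroup_card_two_eq_card_orderOf_two,
    card_orderOf_two_ker_whittenSign_two]
  norm_num
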